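/- Let Φ, Ĝ, Ḡ be symmetric n×n real matrices such that Φ is positive definite, Ĝ is positive definite, Ĝ − Φ is positive definite, and Ḡ + Ĝ⁻¹ is positive semidefinite. Then Ḡ + (Ĝ − Φ)⁻¹ is positive definite. -/

import Mathlib

open Matrix

/-- Second sufficient condition: if `Φ > 0`, `Ĝ > 0`, `Ĝ - Φ > 0` and
`Ḡ + Ĝ⁻¹ ≥ 0`, then `Ḡ + (Ĝ - Φ)⁻¹ > 0`. -/
theorem stmt_6 (n : ℕ) (Φ Ghat Gbar : Matrix (Fin n) (Fin n) ℝ)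
    (hΦ : Φ.PosDef) (hGhat : Ghat.PosDef) (hGbar : Gbar.IsHermitian)
    (hdiff : (Ghat - Φ).PosDef) (hsum : (Gbar + Ghat⁻¹).PosSemidef) :
    (Gbar + (Ghat - Φ)⁻¹).PosDef := by
  obtain ⟨D, hD⟩ : ∃ D, D = Ghat - Φ := ⟨_, rfl⟩
  have hG : Ghat = D + Φ := by rw [hD]; abel
  rw [← hD] at hdiff ⊢
  have uD : IsUnit D.det := (Matrix.isUnit_iff_isUnit_det _).1 hdiff.isUnit
  have uG : IsUnit Ghat.det := (Matrix.isUnit_iff_isUnit_det _).1 hGhat.isUnit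
  have hM : (Φ + Φ * D⁻¹ * Φ).PosDef := by
    have h := hdiff.inv.posSemidef.conjTranspose_mul_mul_same Φ
    rw [hΦ.isHermitian.eq] at h
    exact hΦ.add_posSemidef h
  have e : Φ + Φ * D⁻¹ * Φ = Ghat * D⁻¹ * Ghat - Ghat := by
    rw [hG, add_mul, Matrix.mul_nonsing_inv _ uD, add_mul, one_mul, mul_add,
      mul_assoc Φ D⁻¹ D, Matrix.nonsing_inv_mul _ uD, mul_one]
    abel
  have inj : Function.Injective (Ghat⁻¹).mulVec :=
    Matrix.mulVec_injective_of_isUnit hGhat.inv.isUnit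
  have hK := hM.conjTranspose_mul_mul_same inj
  rw [hGhat.inv.isHermitian.eq, e] at hK
  have e2 : Ghat⁻¹ * (Ghat * D⁻¹ * Ghat - Ghat) * Ghat⁻¹ = D⁻¹ - Ghat⁻¹ := by
    rw [mul_sub, sub_mul, mul_assoc Ghat, Matrix.nonsing_inv_mul_cancel_left _ _ uG,
      Matrix.mul_nonsing_inv_cancel_right _ _ uG, Matrix.nonsing_inv_mul _ uG, one_mul]
  rw [e2] at hK
  have e3 : Gbar + D⁻¹ = (D⁻¹ - Ghat⁻¹) + (Gbar + Ghat⁻¹) := by abel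
  rw [e3]
  exact hK.add_posSemidef hsum
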